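/- arXiv:2210.08245 — 3 statements merged into one kernel-verified Lean document; each statement's English description precedes it below -/
import Mathlib

section
/- Let F be a field, n ≥ 1 an integer, and ε ∈ F with ε^n = 1. For polynomials p, q ∈ F[X] define p∘q := p(εX)·q(εX) (substitute εX for X in each factor, then multiply), and let I be the ideal of F[X] generated by X^n − 1. Then: (a) if p − p' ∈ I then (p∘q) − (p'∘q) ∈ I, so ∘ descends to a well-defined commutative multiplication on the quotient F[X]/(X^n − 1); (b) for all p, q, r, s ∈ F[X], (p∘q)∘(r∘s) = (p∘r)∘(q∘s), so the resulting algebra 𝒞ₙ = (F[X]/(X^n − 1), ∘) is medial. -/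
open Polynomial

/-- For a field `F`, `n ≥ 1` and `ε ∈ F` with `εⁿ = 1`, the twisted
product `p∘q := p(εX)·q(εX)` descends to a well-defined commutative multiplication on
`F[X]/(Xⁿ − 1)` and satisfies the medial identity `(p∘q)∘(r∘s) = (p∘r)∘(q∘s)`. -/
theorem cyclotomic_model_medial {F : Type*} [Field F] (n : ℕ) (hn : 1 ≤ n)
    (ε : F) (hε : ε ^ n = 1) :
    ∀ op : Polynomial F → Polynomial F → Polynomial F,
      (∀ p q : Polynomial F, op p q = p.comp (C ε * X) * q.comp (C ε * X)) →
      (∀ p p' q : Polynomial F,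
        p - p' ∈ Ideal.span {(X : Polynomial F) ^ n - 1} →
        op p q - op p' q ∈ Ideal.span {(X : Polynomial F) ^ n - 1}) ∧
      (∀ p q : Polynomial F, op p q = op q p) ∧
      (∀ p q r s : Polynomial F, op (op p q) (op r s) = op (op p r) (op q s)) := by
  intro op hop
  refine ⟨fun p p' q h => ?_, fun p q => ?_, fun p q r s => ?_⟩
  · rw [Ideal.mem_span_singleton] at h ⊢
    obtain ⟨c, hc⟩ := h
    -- The modulus is invariant under `X ↦ εX`, because `(εX)ⁿ = Xⁿ`.
    have hX : ((X : Polynomial F) ^ n - 1).comp (C ε * X) = X ^ n - 1 := by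
      rw [sub_comp, pow_comp, X_comp, one_comp, mul_pow, ← C_pow, hε, C_1, one_mul]
    refine ⟨c.comp (C ε * X) * q.comp (C ε * X), ?_⟩
    rw [hop, hop, ← sub_mul, ← sub_comp, hc, mul_comp, hX, mul_assoc]
  · rw [hop, hop, mul_comm]
  · simp only [hop, mul_comp]
    ring
end

section
/- Let F be a field, n ≥ 1 an integer, and ε ∈ F a primitive n-th root of unity. Define the linear map T_p : F[X] → F[X] by T_p(q) = p(εX)·q(εX), and set Δ(p) := ∏_{k=0}^{n−1} p(ε^k) ∈ F. Then for all p, q ∈ F[X], the n-th iterate of T_p satisfies T_p^n(q) − Δ(p)·q ∈ Ideal generated by (X^n − 1); moreover Δ is multiplicative on F[X]: Δ(p·q) = Δ(p)·Δ(q). -/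
open Polynomial

/-!
The `m`-th iterate of `T_p` takes the value `p(εx) p(ε²x) ⋯ p(εᵐx) · q(εᵐx)` at `x`
(`eval_iterate_twist`). For `m = n` and `x = ε^j` the product runs once over all `n`-th roots of
unity, since the powers of `ε` have period `n` (`prod_range_shift`), so the value is `Δ(p) q(ε^j)`.
Hence `T_pⁿ(q) - Δ(p) q` vanishes at every `n`-th root of unity, and as `Xⁿ - 1` is the product of
the `n` pairwise coprime factors `X - ζ`, it divides the difference
(`X_pow_sub_one_dvd_of_eval_eq_zero`). Multiplicativity of `Δ` is that of evaluation.
-/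

theorem eval_iterate_twist {F : Type*} [Field F] (ε : F) (p q : F[X]) (m : ℕ) (x : F) :
    ((fun q : F[X] => p.comp (C ε * X) * q.comp (C ε * X))^[m] q).eval x =
      (∏ k ∈ Finset.range m, p.eval (ε ^ (k + 1) * x)) * q.eval (ε ^ m * x) := by
  induction m generalizing x with
  | zero => simp
  | succ m ih =>
    rw [Function.iterate_succ_apply', Finset.prod_range_succ']
    simp only [eval_mul, eval_comp, eval_C, eval_X, ih, zero_add, pow_succ, mul_assoc]
    ring_nf

theorem prod_range_shift {M : Type*} [CommMonoid M] (g : ℕ → M) (n : ℕ)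
    (hg : ∀ k, g (k + n) = g k) (j : ℕ) :
    ∏ k ∈ Finset.range n, g (k + j) = ∏ k ∈ Finset.range n, g k := by
  induction j with
  | zero => rfl
  | succ j ih =>
    cases n with
    | zero => rfl
    | succ n =>
      rw [← ih, Finset.prod_range_succ, Finset.prod_range_succ' (fun k => g (k + j))]
      have e : g (n + (j + 1)) = g (0 + j) := by
        rw [← hg (0 + j)]
        congr 1
        ring
      rw [e]
      congr 1
      refine Finset.prod_congr rfl fun k _ => ?_
      congr 1
      ring

theorem X_pow_sub_one_dvd_of_eval_eq_zero {F : Type*} [Field F] {n : ℕ} (hn : 1 ≤ n) {ε : F}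
    (hε : IsPrimitiveRoot ε n) (f : F[X]) (hf : ∀ j, f.eval (ε ^ j) = 0) :
    (X : F[X]) ^ n - 1 ∣ f := by
  have : NeZero n := ⟨by omega⟩
  rw [X_pow_sub_one_eq_prod hn hε]
  refine Finset.prod_dvd_of_coprime (fun a _ b _ hab =>
    pairwise_coprime_X_sub_C Function.injective_id hab) fun ζ hζ => ?_
  rw [mem_nthRootsFinset hn] at hζ
  obtain ⟨j, -, rfl⟩ := hε.eq_pow_of_pow_eq_one hζ
  exact dvd_iff_isRoot.mpr (hf j)

/-- For a primitive `n`-th root of unity `ε` in a field `F`, the operator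
`T_p(q) = p(εX)·q(εX)` satisfies `T_pⁿ(q) ≡ Δ(p)·q mod (Xⁿ − 1)` where
`Δ(p) = ∏_{k<n} p(ε^k)`, and `Δ` is multiplicative on `F[X]`. -/
theorem cyclotomic_model_power_identity {F : Type*} [Field F] (n : ℕ) (hn : 1 ≤ n)
    (ε : F) (hε : IsPrimitiveRoot ε n) :
    (∀ p q : Polynomial F,
      (fun q : Polynomial F => p.comp (C ε * X) * q.comp (C ε * X))^[n] q
          - C (∏ k ∈ Finset.range n, p.eval (ε ^ k)) * q
        ∈ Ideal.span {(X : Polynomial F) ^ n - 1}) ∧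
    (∀ p q : Polynomial F,
      (∏ k ∈ Finset.range n, (p * q).eval (ε ^ k)) =
        (∏ k ∈ Finset.range n, p.eval (ε ^ k)) *
          ∏ k ∈ Finset.range n, q.eval (ε ^ k)) := by
  refine ⟨fun p q => ?_, fun p q => by simp only [eval_mul, Finset.prod_mul_distrib]⟩
  rw [Ideal.mem_span_singleton]
  refine X_pow_sub_one_dvd_of_eval_eq_zero hn hε _ fun j => ?_
  have h := prod_range_shift (fun k => p.eval (ε ^ k)) n
    (fun k => by simp only [pow_add, hε.pow_eq_one, mul_one]) (1 + j)
  simp only [← add_assoc, pow_add _ _ j] at h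
  rw [eval_sub, eval_iterate_twist, eval_mul, eval_C, h, hε.pow_eq_one, one_mul, sub_self]
end

section
/- Let F be a field, n ≥ 1 an integer, ε ∈ F a primitive n-th root of unity, and I the ideal of F[X] generated by X^n − 1. Suppose p ∈ F[X] satisfies p(εX)·p(εX) − p ∈ I (p is an idempotent of the medial algebra 𝒞ₙ = (F[X]/(X^n−1), ∘)) and p ∉ I (p is nonzero in 𝒞ₙ). Then ∏_{k=0}^{n−1} p(ε^k) = 1, and for every integer k with 0 ≤ k ≤ n−1: p(εX)·(ε^k X^k)·p(εX) − ε^k·X^k·p ∈ I, i.e., the class of X^k·p in F[X]/(X^n−1) is an eigenvector of ∘-multiplication by p with eigenvalue ε^k. -/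
open Polynomial

/-!
Write `a k = p(ε^k)`. Evaluating the idempotency relation at `ε^k` gives `a (k+1) ^ 2 = a k`, and
`a` is `n`-periodic. Hence if one `a k` vanishes, all do; then `p` vanishes at all `n`-th roots of
unity and is divisible by `X^n - 1`, contrary to `p ≠ 0` in the quotient. So `P = ∏ a k` is nonzero,
and the cyclic shift gives `P ^ 2 = P`, so `P = 1`. The eigenvector relation is the idempotency
relation multiplied by `ε^k X^k`.
-/

/-- A polynomial vanishing at all powers of a primitive `n`-th root of unity is divisible by
`X ^ n - 1`, since the latter is a product of distinct linear factors. -/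
lemma X_pow_sub_one_dvd_of_eval_pow_eq_zero {F : Type*} [Field F] {n : ℕ} (hn : 1 ≤ n)
    {ε : F} (hε : IsPrimitiveRoot ε n) {p : Polynomial F}
    (h : ∀ k, p.eval (ε ^ k) = 0) : (X : Polynomial F) ^ n - 1 ∣ p := by
  rw [X_pow_sub_one_eq_prod hn hε]
  refine Finset.prod_dvd_of_coprime ?_ ?_
  · exact (pairwise_coprime_X_sub_C Function.injective_id).set_pairwise _
  · intro ζ hζ
    rw [mem_nthRootsFinset hn] at hζ
    have : NeZero n := ⟨by omega⟩
    obtain ⟨i, -, rfl⟩ := hε.eq_pow_of_pow_eq_one hζ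
    exact dvd_iff_isRoot.mpr (h i)

/-- Let `ε` be a primitive `n`-th root of unity in a field `F` and let
`p` represent a nonzero idempotent of the medial algebra `𝒞ₙ = (F[X]/(Xⁿ−1), ∘)`,
i.e. `p(εX)·p(εX) ≡ p mod (Xⁿ−1)` and `p ∉ (Xⁿ−1)`. Then `∏_{k<n} p(ε^k) = 1` and for
every `0 ≤ k ≤ n−1` the class of `X^k·p` is an eigenvector of `∘`-multiplication by `p`
with eigenvalue `ε^k`: `p(εX)·(ε^k X^k)·p(εX) ≡ ε^k·(X^k·p) mod (Xⁿ−1)`. -/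
theorem cyclotomic_model_idempotent_spectrum {F : Type*} [Field F] (n : ℕ) (hn : 1 ≤ n)
    (ε : F) (hε : IsPrimitiveRoot ε n) (p : Polynomial F)
    (hidem : p.comp (C ε * X) * p.comp (C ε * X) - p
      ∈ Ideal.span {(X : Polynomial F) ^ n - 1})
    (hne : p ∉ Ideal.span {(X : Polynomial F) ^ n - 1}) :
    (∏ k ∈ Finset.range n, p.eval (ε ^ k)) = 1 ∧
    ∀ k : ℕ, k ≤ n - 1 →
      p.comp (C ε * X) * (C (ε ^ k) * X ^ k) * p.comp (C ε * X)
          - C (ε ^ k) * (X ^ k * p)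
        ∈ Ideal.span {(X : Polynomial F) ^ n - 1} := by
  rw [Ideal.mem_span_singleton] at hidem hne
  simp only [Ideal.mem_span_singleton]
  refine ⟨?_, fun k _ => ?_⟩
  · have hrec : ∀ k, p.eval (ε ^ (k + 1)) ^ 2 = p.eval (ε ^ k) := by
      intro k
      obtain ⟨q, hq⟩ := hidem
      have h1 : (ε ^ k) ^ n = 1 := by rw [pow_right_comm, hε.pow_eq_one, one_pow]
      have h2 := congrArg (eval (ε ^ k)) hq
      simp only [eval_sub, eval_mul, eval_comp, eval_C, eval_X, eval_pow, eval_one, h1, sub_self,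
        zero_mul] at h2
      rw [sq, pow_succ']
      exact sub_eq_zero.mp h2
    have hstep : ∀ k, p.eval (ε ^ k) = 0 → ∀ j, p.eval (ε ^ (k + j)) = 0 := by
      intro k hk j
      induction j with
      | zero => exact hk
      | succ j ih => exact pow_eq_zero_iff two_ne_zero |>.mp ((hrec (k + j)).trans ih)
    have hnz : ∀ k, p.eval (ε ^ k) ≠ 0 := by
      intro k hk
      refine hne (X_pow_sub_one_dvd_of_eval_pow_eq_zero hn hε fun j => ?_)
      -- Zeros propagate forwards only, so `ε ^ j` is reached from `ε ^ k` as `ε ^ (j + k * n)`.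
      have h3 := hstep k hk (j + k * (n - 1))
      have h4 : k + (j + k * (n - 1)) = j + n * k := by
        obtain ⟨m, rfl⟩ := Nat.exists_eq_add_of_le' hn
        simp only [Nat.add_sub_cancel]
        ring
      rwa [h4, pow_add, pow_mul, hε.pow_eq_one, one_pow, mul_one] at h3
    have hshift : ∏ k ∈ Finset.range n, p.eval (ε ^ (k + 1))
        = ∏ k ∈ Finset.range n, p.eval (ε ^ k) := by
      have h5 := (Finset.prod_range_succ' (fun k => p.eval (ε ^ k)) n).symm.trans
        (Finset.prod_range_succ (fun k => p.eval (ε ^ k)) n)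
      rw [hε.pow_eq_one, ← pow_zero ε] at h5
      exact mul_right_cancel₀ (hnz 0) h5
    have hsq : (∏ k ∈ Finset.range n, p.eval (ε ^ k)) ^ 2
        = ∏ k ∈ Finset.range n, p.eval (ε ^ k) := by
      conv_lhs => rw [← hshift, ← Finset.prod_pow]
      exact Finset.prod_congr rfl fun k _ => hrec k
    have hP : ∏ k ∈ Finset.range n, p.eval (ε ^ k) ≠ 0 :=
      Finset.prod_ne_zero_iff.mpr fun k _ => hnz k
    rw [sq] at hsq
    exact mul_right_cancel₀ hP (hsq.trans (one_mul _).symm)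
  · convert hidem.mul_left (C (ε ^ k) * X ^ k) using 1
    ring
end
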